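/- arXiv:1409.5877 — 3 statements merged into one kernel-verified Lean document; each statement's English description precedes it below -/
import Mathlib

section
/- Let p > 1 and a = 0. Let f ≡ 0 and let g ∈ C¹(ℝ) satisfy g ≥ 0 on ℝ, g not identically zero, and ∫_{−1}^{1} g(y) dy > 0. Then there exist positive constants ε₀ = ε₀(g,p) and C = C(g,p) such that for every ε with 0 < ε ≤ ε₀ and every T > φ^{−1}(C·ε^{−(p−1)}), there is no function u ∈ C(ℝ×[0,T]) satisfying u(x,t) = (ε/2)∫_{x−t}^{x+t} g(y) dy + (1/2)∬_{D(x,t)} |u(y,s)|^p (1+y²)^{−1/2} dy ds for all (x,t) ∈ ℝ×[0,T]. In particular the lifespan satisfies T_ε ≤ φ^{−1}(C·ε^{−(p−1)}). -/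
open MeasureTheory Real Set Filter

/-!
Positivity of the data gives a bound `w ≤ u` with `w` proportional to `ε` on the rectangle
`|x| ≤ T / 16`, `T / 2 ≤ t ≤ T`. If `μ ≤ u` on `|x| ≤ R`, `T - 8 * R ≤ t ≤ T`, then every backward
characteristic triangle with vertex in the rectangle with `R / 2` in place of `R` contains
`[0, R] × [T - 8 * R, T - 6 * R]`, and integrating `μ ^ p / (1 + y)` over this set gives
`R * log (1 + R) * μ ^ p ≤ u` on the smaller rectangle. Halving `R` costs at most a factor `4` in
`R * log (1 + R)`, whereas multiplying `μ` by `growthRatio p = 4 ^ (1 / (p - 1))` gains a factor `4`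
in `μ ^ (p - 1)`. Hence, once `T * log (2 + T) * w ^ (p - 1)` is large,
`w * growthRatio p ^ k ≤ u 0 T` for all `k`.
-/

section Real

lemma mul_log_one_add_le_log_one_add_mul {x θ : ℝ} (hx : -1 < x) (hθ₀ : 0 ≤ θ) (hθ₁ : θ ≤ 1) :
    θ * log (1 + x) ≤ log (1 + θ * x) := by
  have hx' : 0 < 1 + x := by linarith
  rw [← log_rpow hx']
  exact log_le_log (rpow_pos_of_pos hx' θ) (rpow_one_add_le_one_add_mul_self hx.le hθ₀ hθ₁)

lemma log_two_add_le_two_mul_log_one_add {x : ℝ} (hx : 1 ≤ x) :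
    log (2 + x) ≤ 2 * log (1 + x) :=
  calc log (2 + x) ≤ log ((1 + x) ^ 2) := log_le_log (by linarith) (by nlinarith)
    _ = 2 * log (1 + x) := by rw [log_pow, Nat.cast_ofNat]

lemma sq_div_two_mul_log_le {x θ : ℝ} (hx : 1 ≤ x) (hθ₀ : 0 ≤ θ) (hθ₁ : θ ≤ 1) :
    θ ^ 2 / 2 * (x * log (2 + x)) ≤ θ * x * log (1 + θ * x) :=
  calc θ ^ 2 / 2 * (x * log (2 + x)) ≤ θ ^ 2 / 2 * (x * (2 * log (1 + x))) := by
        gcongr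
        exact log_two_add_le_two_mul_log_one_add hx
    _ = θ * x * (θ * log (1 + x)) := by ring
    _ ≤ θ * x * log (1 + θ * x) := by
        gcongr
        exact mul_log_one_add_le_log_one_add_mul (by linarith) hθ₀ hθ₁

lemma monotoneOn_mul_log_two_add : MonotoneOn (fun x : ℝ ↦ x * log (2 + x)) (Ici 0) := by
  intro x (hx : 0 ≤ x) y _ hxy
  have hlog : 0 ≤ log (2 + x) := log_nonneg (by linarith)
  dsimp only
  gcongr

lemma intervalIntegrable_inv_one_add {R : ℝ} (hR : 0 ≤ R) :
    IntervalIntegrable (fun y : ℝ ↦ (1 + y)⁻¹) volume 0 R := by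
  refine ContinuousOn.intervalIntegrable (ContinuousOn.inv₀ (by fun_prop) fun y hy ↦ ?_)
  rw [uIcc_of_le hR] at hy
  linarith [hy.1]

lemma integral_inv_one_add {R : ℝ} (hR : 0 ≤ R) : ∫ y in (0 : ℝ)..R, (1 + y)⁻¹ = log (1 + R) := by
  rw [intervalIntegral.integral_comp_add_left (fun y ↦ y⁻¹), add_zero,
    integral_inv_of_pos one_pos (by linarith), div_one]

lemma one_add_sq_rpow_half_le {y : ℝ} (hy : 0 ≤ y) : (1 + y ^ 2) ^ ((1 : ℝ) / 2) ≤ 1 + y := by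
  simpa only [norm_of_nonneg hy, sqrt_eq_rpow] using sqrt_one_add_norm_sq_le y

end Real

section IntervalIntegral

lemma continuousOn_intervalIntegral_of_continuousOn {E : Type*} [NormedAddCommGroup E]
    [NormedSpace ℝ E] {F : ℝ → ℝ → E} {S : Set ℝ} {α β : ℝ → ℝ}
    (hF : ContinuousOn (fun q : ℝ × ℝ ↦ F q.1 q.2) (univ ×ˢ S))
    (hα : ContinuousOn α S) (hβ : ContinuousOn β S) :
    ContinuousOn (fun s ↦ ∫ y in α s..β s, F y s) S := by
  rw [continuousOn_iff_continuous_domRestrict] at hα hβ ⊢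
  have hF' : Continuous (Function.uncurry fun (s : S) y ↦ F y s) :=
    hF.comp_continuous (f := fun q : S × ℝ ↦ (q.2, (q.1 : ℝ))) (by fun_prop)
      fun q ↦ ⟨mem_univ _, q.1.2⟩
  have hint (s : S) (a b : ℝ) : IntervalIntegrable (fun y ↦ F y s) volume a b :=
    (hF'.comp (Continuous.prodMk_right s)).intervalIntegrable a b
  have hprim {γ : S → ℝ} (hγ : Continuous γ) : Continuous fun s : S ↦ ∫ y in (0 : ℝ)..γ s, F y s :=
    intervalIntegral.continuous_parametric_intervalIntegral_of_continuous hF' hγ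
  exact ((hprim hβ).sub (hprim hα)).congr fun s ↦
    intervalIntegral.integral_interval_sub_left (hint s _ _) (hint s _ _)

lemma intervalIntegrable_of_locallyIntegrable {g : ℝ → ℝ} (hg : LocallyIntegrable g) (a b : ℝ) :
    IntervalIntegrable g volume a b :=
  (hg.integrableOn_isCompact isCompact_uIcc).intervalIntegrable

lemma exists_intervalIntegral_pos {g : ℝ → ℝ} (hg : LocallyIntegrable g) (hg₀ : 0 ≤ᵐ[volume] g)
    (hg_ne : ¬ g =ᵐ[volume] 0) : ∃ r ≥ 0, 0 < ∫ y in (-r)..r, g y := by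
  by_contra! hnonpos
  have hzero (n : ℕ) : g =ᵐ[volume.restrict (Ioc (-n : ℝ) n)] 0 := by
    have hn : (-n : ℝ) ≤ n := neg_le_self n.cast_nonneg
    rw [← intervalIntegral.integral_eq_zero_iff_of_le_of_nonneg_ae hn (ae_restrict_of_ae hg₀)
      (intervalIntegrable_of_locallyIntegrable hg _ _)]
    exact (hnonpos n n.cast_nonneg).antisymm
      (intervalIntegral.integral_nonneg_of_ae hn hg₀)
  have hcover : ⋃ n : ℕ, Ioc (-n : ℝ) n = univ := by
    refine iUnion_eq_univ_iff.2 fun x ↦ ?_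
    obtain ⟨n, hn⟩ := exists_nat_gt |x|
    exact ⟨n, (abs_lt.1 hn).1, (abs_lt.1 hn).2.le⟩
  refine hg_ne ?_
  rw [← Measure.restrict_univ (μ := volume), ← hcover]
  exact (ae_restrict_iUnion_iff _ _).2 hzero

end IntervalIntegral

section Duhamel

/-- The solution at `(x, t)` of `w_tt - w_xx = F` with zero initial data: half the integral of `F`
over the backward characteristic triangle with vertex `(x, t)`. -/
noncomputable def waveDuhamel (F : ℝ → ℝ → ℝ) (x t : ℝ) : ℝ :=
  1 / 2 * ∫ s in (0 : ℝ)..t, ∫ y in (x - t + s)..(x + t - s), F y s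

lemma waveDuhamel_nonneg {F : ℝ → ℝ → ℝ} {x t : ℝ} (ht : 0 ≤ t)
    (hF : ∀ y, ∀ s ∈ Icc 0 t, 0 ≤ F y s) : 0 ≤ waveDuhamel F x t := by
  refine mul_nonneg one_half_pos.le (intervalIntegral.integral_nonneg ht fun s hs ↦ ?_)
  exact intervalIntegral.integral_nonneg (by linarith [hs.2]) fun y _ ↦ hF y s hs

lemma mul_integral_le_waveDuhamel {F : ℝ → ℝ → ℝ} {h : ℝ → ℝ} {x t a b c d : ℝ}
    (hF : ContinuousOn (fun q : ℝ × ℝ ↦ F q.1 q.2) (univ ×ˢ Icc 0 t))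
    (hF₀ : ∀ y, ∀ s ∈ Icc 0 t, 0 ≤ F y s)
    (ha : 0 ≤ a) (hab : a ≤ b) (hbt : b ≤ t)
    (hc : x - t + b ≤ c) (hcd : c ≤ d) (hd : d ≤ x + t - b)
    (hh : IntervalIntegrable h volume c d) (hhF : ∀ s ∈ Icc a b, ∀ y ∈ Icc c d, h y ≤ F y s) :
    (b - a) / 2 * ∫ y in c..d, h y ≤ waveDuhamel F x t := by
  have ht : 0 ≤ t := ha.trans (hab.trans hbt)
  have hsub : Icc a b ⊆ Icc 0 t := Icc_subset_Icc ha hbt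
  have hslice (s : ℝ) (hs : s ∈ Icc 0 t) (y₁ y₂ : ℝ) :
      IntervalIntegrable (fun y ↦ F y s) volume y₁ y₂ :=
    (hF.comp_continuous (Continuous.prodMk_left s) fun _ ↦ ⟨mem_univ _, hs⟩).intervalIntegrable _ _
  have hcont : ContinuousOn (fun s ↦ ∫ y in (x - t + s)..(x + t - s), F y s) (Icc 0 t) :=
    continuousOn_intervalIntegral_of_continuousOn hF (by fun_prop) (by fun_prop)
  have hinner (s : ℝ) (hs : s ∈ Icc a b) :
      ∫ y in c..d, h y ≤ ∫ y in (x - t + s)..(x + t - s), F y s :=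
    calc ∫ y in c..d, h y ≤ ∫ y in c..d, F y s :=
        intervalIntegral.integral_mono_on hcd hh (hslice s (hsub hs) _ _) (hhF s hs)
      _ ≤ ∫ y in (x - t + s)..(x + t - s), F y s :=
        intervalIntegral.integral_mono_interval (by linarith [hs.2]) hcd (by linarith [hs.2])
          (.of_forall fun y ↦ hF₀ y s (hsub hs)) (hslice s (hsub hs) _ _)
  have hinner_nonneg : ∀ s ∈ Ioc 0 t, 0 ≤ ∫ y in (x - t + s)..(x + t - s), F y s := fun s hs ↦
    intervalIntegral.integral_nonneg (by linarith [hs.2]) fun y _ ↦ hF₀ y s (Ioc_subset_Icc_self hs)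
  calc (b - a) / 2 * ∫ y in c..d, h y = 1 / 2 * ∫ _ in a..b, ∫ y in c..d, h y := by
        rw [intervalIntegral.integral_const, smul_eq_mul]
        ring
    _ ≤ 1 / 2 * ∫ s in a..b, ∫ y in (x - t + s)..(x + t - s), F y s := by
        gcongr
        exact intervalIntegral.integral_mono_on hab intervalIntegrable_const
          ((hcont.mono hsub).intervalIntegrable_of_Icc hab) hinner
    _ ≤ waveDuhamel F x t := by
        refine mul_le_mul_of_nonneg_left ?_ one_half_pos.le
        exact intervalIntegral.integral_mono_interval ha hab hbt
          (ae_restrict_of_forall_mem measurableSet_Ioc hinner_nonneg)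
          (hcont.intervalIntegrable_of_Icc ht)

end Duhamel

section Iteration

/-- The nonlinearity `|u|^p (1 + |x|²)^{-1/2}` of the wave equation. -/
noncomputable def weightedPower (p : ℝ) (u : ℝ → ℝ → ℝ) (y s : ℝ) : ℝ :=
  |u y s| ^ p / (1 + y ^ 2) ^ ((1 : ℝ) / 2)

lemma weightedPower_nonneg (p : ℝ) (u : ℝ → ℝ → ℝ) (y s : ℝ) : 0 ≤ weightedPower p u y s := by
  unfold weightedPower
  positivity

lemma continuousOn_weightedPower {p : ℝ} (hp : 0 ≤ p) {u : ℝ → ℝ → ℝ} {S : Set (ℝ × ℝ)}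
    (hu : ContinuousOn (fun q : ℝ × ℝ ↦ u q.1 q.2) S) :
    ContinuousOn (fun q : ℝ × ℝ ↦ weightedPower p u q.1 q.2) S := by
  refine (hu.abs.rpow_const fun _ _ ↦ .inr hp).div ?_ fun q _ ↦ by positivity
  exact ContinuousOn.rpow_const (by fun_prop) fun _ _ ↦ .inr one_half_pos.le

/-- The rectangle `|x| ≤ R`, `T - 8 R ≤ t ≤ T` on which the iteration propagates lower bounds. The
duration `8 R` is long enough for every backward characteristic triangle with vertex in
`terminalRectangle T (R / 2)` to contain `[0, R] × [T - 8 R, T - 6 R]`. -/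
def terminalRectangle (T R : ℝ) : Set (ℝ × ℝ) := Icc (-R) R ×ˢ Icc (T - 8 * R) T

lemma terminalRectangle_mono (T : ℝ) : Monotone (terminalRectangle T) := fun _ _ h ↦
  prod_mono (Icc_subset_Icc (neg_le_neg h) h) (Icc_subset_Icc_left (by linarith))

lemma mul_log_mul_rpow_le_waveDuhamel {p T R μ x t : ℝ} {u : ℝ → ℝ → ℝ} (hp : 0 ≤ p)
    (hR : 0 ≤ R) (hRT : 8 * R ≤ T) (hμ : 0 ≤ μ)
    (hu : ContinuousOn (fun q : ℝ × ℝ ↦ u q.1 q.2) (univ ×ˢ Icc 0 T))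
    (hμu : ∀ y s, (y, s) ∈ terminalRectangle T R → μ ≤ |u y s|)
    (hxt : (x, t) ∈ terminalRectangle T (R / 2)) :
    R * log (1 + R) * μ ^ p ≤ waveDuhamel (weightedPower p u) x t := by
  obtain ⟨⟨hx₁, hx₂⟩, ht₁, ht₂⟩ := hxt
  have hlower : ∀ s ∈ Icc (T - 8 * R) (T - 6 * R), ∀ y ∈ Icc 0 R,
      μ ^ p * (1 + y)⁻¹ ≤ weightedPower p u y s := by
    intro s hs y hy
    have hμ_le : μ ≤ |u y s| :=
      hμu y s ⟨⟨by linarith [hy.1], hy.2⟩, hs.1, by linarith [hs.2]⟩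
    rw [weightedPower, div_eq_mul_inv]
    gcongr
    · exact inv_nonneg.2 (by linarith [hy.1])
    · exact one_add_sq_rpow_half_le hy.1
  calc R * log (1 + R) * μ ^ p
      = (T - 6 * R - (T - 8 * R)) / 2 * ∫ y in (0 : ℝ)..R, μ ^ p * (1 + y)⁻¹ := by
        rw [intervalIntegral.integral_const_mul, integral_inv_one_add hR]
        ring
    _ ≤ waveDuhamel (weightedPower p u) x t := by
        refine mul_integral_le_waveDuhamel
          (continuousOn_weightedPower hp (hu.mono (prod_mono_right (Icc_subset_Icc_right ht₂))))
          (fun y s _ ↦ weightedPower_nonneg p u y s) ?_ ?_ ?_ ?_ hR ?_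
          ((intervalIntegrable_inv_one_add hR).const_mul _) hlower <;> linarith

/-- The ratio of successive lower bounds in the iteration. Its `(p - 1)`-th power compensates the
factor `4` lost in `R * log (1 + R)` when the radius `R` is halved. -/
noncomputable def growthRatio (p : ℝ) : ℝ := 4 ^ (1 / (p - 1))

lemma growthRatio_pos (p : ℝ) : 0 < growthRatio p := rpow_pos_of_pos four_pos _

lemma one_lt_growthRatio {p : ℝ} (hp : 1 < p) : 1 < growthRatio p :=
  one_lt_rpow (by norm_num) (one_div_pos.2 (sub_pos.2 hp))

lemma growthRatio_rpow_sub_one {p : ℝ} (hp : p ≠ 1) : growthRatio p ^ (p - 1) = 4 := by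
  rw [growthRatio, one_div, rpow_inv_rpow (by norm_num) (sub_ne_zero.2 hp)]

lemma mul_growthRatio_pow_rpow {p w : ℝ} (hp : p ≠ 1) (hw : 0 < w) (k : ℕ) :
    (w * growthRatio p ^ k) ^ p = w ^ (p - 1) * 4 ^ k * (w * growthRatio p ^ k) := by
  have hratio := growthRatio_pos p
  have hpos : 0 < w * growthRatio p ^ k := by positivity
  calc (w * growthRatio p ^ k) ^ p
      = (w * growthRatio p ^ k) ^ (p - 1) * (w * growthRatio p ^ k) := by
        rw [rpow_sub_one hpos.ne', div_mul_cancel₀ _ hpos.ne']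
    _ = w ^ (p - 1) * 4 ^ k * (w * growthRatio p ^ k) := by
        rw [mul_rpow hw.le (by positivity), ← rpow_pow_comm hratio.le, growthRatio_rpow_sub_one hp]

lemma mul_growthRatio_pow_succ_le {p T w : ℝ} (hp : p ≠ 1) (hT : 1 ≤ T) (hw : 0 < w)
    (hlarge : 512 * growthRatio p ≤ T * log (2 + T) * w ^ (p - 1)) (k : ℕ) :
    w * growthRatio p ^ (k + 1) ≤
      T / 2 ^ (k + 4) * log (1 + T / 2 ^ (k + 4)) * (w * growthRatio p ^ k) ^ p := by
  have hratio := growthRatio_pos p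
  have hlog := sq_div_two_mul_log_le hT (θ := 1 / 2 ^ (k + 4)) (by positivity)
    (div_le_one_of_le₀ (one_le_pow₀ one_le_two) (by positivity))
  rw [one_div_mul_eq_div] at hlog
  -- The initial radius `T / 16` contributes `16 ^ 2`; the remaining `2` comes from `log (2 + T)`.
  have hscale : (1 / 2 ^ (k + 4) : ℝ) ^ 2 / 2 * 4 ^ k = 1 / 512 := by
    rw [show (4 : ℝ) = 2 ^ 2 by norm_num, ← pow_mul]
    field_simp
    ring
  calc w * growthRatio p ^ (k + 1)
      = 1 / 512 * (512 * growthRatio p) * (w * growthRatio p ^ k) := by ring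
    _ ≤ 1 / 512 * (T * log (2 + T) * w ^ (p - 1)) * (w * growthRatio p ^ k) := by gcongr
    _ = (1 / 2 ^ (k + 4)) ^ 2 / 2 * (T * log (2 + T)) * (w * growthRatio p ^ k) ^ p := by
        rw [mul_growthRatio_pow_rpow hp hw, ← hscale]
        ring
    _ ≤ T / 2 ^ (k + 4) * log (1 + T / 2 ^ (k + 4)) * (w * growthRatio p ^ k) ^ p := by gcongr

lemma mul_growthRatio_pow_le_of_supersolution {p T w : ℝ} {u : ℝ → ℝ → ℝ} (hp : 1 < p)
    (hT : 1 ≤ T) (hw : 0 < w)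
    (hlarge : 512 * growthRatio p ≤ T * log (2 + T) * w ^ (p - 1))
    (hu : ContinuousOn (fun q : ℝ × ℝ ↦ u q.1 q.2) (univ ×ˢ Icc 0 T))
    (hsuper : ∀ x t, (x, t) ∈ terminalRectangle T (T / 16) →
      w + waveDuhamel (weightedPower p u) x t ≤ u x t) (k : ℕ) :
    ∀ x t, (x, t) ∈ terminalRectangle T (T / 2 ^ (k + 4)) → w * growthRatio p ^ k ≤ u x t := by
  have hratio := growthRatio_pos p
  have hrad (k : ℕ) : T / 2 ^ (k + 4) ≤ T / 16 := by
    rw [show (16 : ℝ) = 2 ^ 4 by norm_num]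
    gcongr
    exacts [one_le_two, by lia]
  induction k with
  | zero =>
    intro x t hxt
    have hxt' := terminalRectangle_mono T (hrad 0) hxt
    have ht : 0 ≤ t := by linarith [hxt'.2.1]
    have hduhamel : 0 ≤ waveDuhamel (weightedPower p u) x t :=
      waveDuhamel_nonneg ht fun y s _ ↦ weightedPower_nonneg p u y s
    linarith [hsuper x t hxt']
  | succ k ih =>
    intro x t hxt
    have hhalf : T / 2 ^ (k + 1 + 4) = T / 2 ^ (k + 4) / 2 := by ring
    have hduhamel := mul_log_mul_rpow_le_waveDuhamel (p := p) (by linarith) (by positivity)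
      (by linarith [hrad k]) (by positivity) hu
      (fun y s hys ↦ (ih y s hys).trans (le_abs_self _)) (hhalf ▸ hxt)
    linarith [hsuper x t (terminalRectangle_mono T (hrad (k + 1)) hxt),
      mul_growthRatio_pow_succ_le hp.ne' hT hw hlarge k]

theorem exists_lt_add_waveDuhamel {p T w : ℝ} {u : ℝ → ℝ → ℝ} (hp : 1 < p) (hT : 1 ≤ T)
    (hw : 0 < w)
    (hlarge : 512 * growthRatio p ≤ T * log (2 + T) * w ^ (p - 1))
    (hu : ContinuousOn (fun q : ℝ × ℝ ↦ u q.1 q.2) (univ ×ˢ Icc 0 T)) :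
    ∃ x t, (x, t) ∈ terminalRectangle T (T / 16) ∧
      u x t < w + waveDuhamel (weightedPower p u) x t := by
  by_contra! hsuper
  obtain ⟨k, hk⟩ := pow_unbounded_of_one_lt (u 0 T / w) (one_lt_growthRatio hp)
  have hmem : (0, T) ∈ terminalRectangle T (T / 2 ^ (k + 4)) := by
    have hrad : 0 ≤ T / 2 ^ (k + 4) := by positivity
    exact ⟨⟨by linarith, hrad⟩, by linarith, le_rfl⟩
  rw [div_lt_iff₀' hw] at hk
  exact hk.not_ge (mul_growthRatio_pow_le_of_supersolution hp hT hw hlarge hu hsuper k 0 T hmem)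

end Iteration

section Lifespan

lemma integral_le_integral_of_mem_terminalRectangle {g : ℝ → ℝ} (hg : LocallyIntegrable g)
    (hg₀ : 0 ≤ᵐ[volume] g) {r T x t : ℝ} (hr : 0 ≤ r) (hrT : 3 * r ≤ T)
    (hxt : (x, t) ∈ terminalRectangle T (T / 16)) :
    ∫ y in (-r)..r, g y ≤ ∫ y in (x - t)..(x + t), g y := by
  obtain ⟨⟨hx₁, hx₂⟩, ht, -⟩ := hxt
  exact intervalIntegral.integral_mono_interval (by linarith) (neg_le_self hr) (by linarith)
    (ae_restrict_of_ae hg₀) (intervalIntegrable_of_locallyIntegrable hg _ _)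

/-- `u` is a continuous mild supersolution on `ℝ × [0, T]` of the wave equation
`u_tt - u_xx = |u|^p (1 + |x|²)^{-1/2}` with initial data `(0, ε g)`: the integral equation holds
with `≥`. -/
structure IsMildSupersolution (p : ℝ) (g : ℝ → ℝ) (ε T : ℝ) (u : ℝ → ℝ → ℝ) : Prop where
  continuousOn : ContinuousOn (fun q : ℝ × ℝ ↦ u q.1 q.2) (univ ×ˢ Icc 0 T)
  add_waveDuhamel_le : ∀ x, ∀ t ∈ Icc 0 T,
    ε / 2 * (∫ y in (x - t)..(x + t), g y) + waveDuhamel (weightedPower p u) x t ≤ u x t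

theorem not_isMildSupersolution_of_large {p : ℝ} (hp : 1 < p) {g : ℝ → ℝ}
    (hg : LocallyIntegrable g) (hg₀ : 0 ≤ᵐ[volume] g) {r T ε : ℝ} (hr : 0 ≤ r) (hrT : 3 * r ≤ T)
    (hT : 1 ≤ T) (hε : 0 < ε) (hgr : 0 < ∫ y in (-r)..r, g y)
    (hlarge : 512 * growthRatio p ≤ T * log (2 + T) * (ε / 2 * ∫ y in (-r)..r, g y) ^ (p - 1))
    (u : ℝ → ℝ → ℝ) : ¬ IsMildSupersolution p g ε T u := by
  intro hu
  obtain ⟨x, t, hxt, hlt⟩ := exists_lt_add_waveDuhamel hp hT (by positivity) hlarge hu.continuousOn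
  have hdata : ε / 2 * ∫ y in (-r)..r, g y ≤ ε / 2 * ∫ y in (x - t)..(x + t), g y := by
    gcongr
    exact integral_le_integral_of_mem_terminalRectangle hg hg₀ hr hrT hxt
  linarith [hu.add_waveDuhamel_le x t ⟨by linarith [hxt.2.1], hxt.2.2⟩]

theorem stmt_1_general {p : ℝ} (hp : 1 < p) {g : ℝ → ℝ} (hg : LocallyIntegrable g)
    (hg₀ : 0 ≤ᵐ[volume] g) (hg_ne : ¬ g =ᵐ[volume] 0) {ε₀ : ℝ} (hε₀ : 0 < ε₀) :
    ∃ C > 0, ∀ ε : ℝ, 0 < ε → ε ≤ ε₀ → ∀ T : ℝ, 0 ≤ T →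
      C * ε ^ (-(p - 1)) < T * log (2 + T) → ¬ ∃ u, IsMildSupersolution p g ε T u := by
  obtain ⟨r, hr, hgr⟩ := exists_intervalIntegral_pos hg hg₀ hg_ne
  set G := (∫ y in (-r)..r, g y) / 2 with hG_def
  have hG_pos : 0 < G := half_pos hgr
  have hG_rpow : 0 < G ^ (p - 1) := rpow_pos_of_pos hG_pos _
  let T₀ := max 1 (3 * r)
  have hT₀ : 0 ≤ T₀ := le_max_of_le_left zero_le_one
  refine ⟨max (T₀ * log (2 + T₀) * ε₀ ^ (p - 1)) (512 * growthRatio p / G ^ (p - 1)),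
    lt_max_of_lt_right (div_pos (mul_pos (by norm_num) (growthRatio_pos p)) hG_rpow),
    fun ε hε hε_le T hT hlt ⟨u, hu⟩ ↦ ?_⟩
  rw [rpow_neg hε.le, ← div_eq_mul_inv, div_lt_iff₀ (rpow_pos_of_pos hε _), max_lt_iff] at hlt
  obtain ⟨hlt_time, hlt_growth⟩ := hlt
  have hT₀_lt : T₀ < T := by
    refine monotoneOn_mul_log_two_add.reflect_lt hT₀ hT
      (lt_of_mul_lt_mul_right (hlt_time.trans_le ?_) (rpow_nonneg hε₀.le (p - 1)))
    have hlog : 0 ≤ log (2 + T) := log_nonneg (by linarith)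
    gcongr
  obtain ⟨hT_one, hT_r⟩ := max_lt_iff.1 hT₀_lt
  refine not_isMildSupersolution_of_large hp hg hg₀ hr hT_r.le hT_one.le hε hgr ?_ u hu
  rw [div_lt_iff₀ hG_rpow] at hlt_growth
  calc 512 * growthRatio p ≤ T * log (2 + T) * ε ^ (p - 1) * G ^ (p - 1) := hlt_growth.le
    _ = T * log (2 + T) * (ε / 2 * ∫ y in (-r)..r, g y) ^ (p - 1) := by
        rw [mul_assoc, ← mul_rpow hε.le hG_pos.le, hG_def, mul_div_left_comm, mul_comm (_ / _)]

end Lifespan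

/-- Blow-up / upper bound of the lifespan in the case `a = 0`:
for small `ε` and `T > φ⁻¹(C ε^{-(p-1)})` (equivalently `φ(T) = T log(2+T) > C ε^{-(p-1)}`),
the integral equation `u = ε u⁰ + L(|u|^p (1+y²)^{-1/2})` has no continuous solution on
`ℝ × [0,T]`. -/
theorem stmt_1 (p : ℝ) (hp : 1 < p)
    (g : ℝ → ℝ) (hg : ContDiff ℝ 1 g) (hgpos : ∀ x, 0 ≤ g x)
    (hgne : ∃ x, g x ≠ 0) (hgint : 0 < ∫ y in (-1:ℝ)..1, g y) :
    ∃ ε₀ > (0:ℝ), ∃ C > (0:ℝ), ∀ ε : ℝ, 0 < ε → ε ≤ ε₀ →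
      ∀ T : ℝ, 0 ≤ T → C * ε ^ (-(p - 1)) < T * Real.log (2 + T) →
        ¬ ∃ u : ℝ → ℝ → ℝ,
            ContinuousOn (fun q : ℝ × ℝ => u q.1 q.2) (Set.univ ×ˢ Set.Icc 0 T) ∧
            ∀ x t : ℝ, t ∈ Set.Icc (0:ℝ) T →
              u x t = ε / 2 * (∫ y in (x - t)..(x + t), g y)
                + 1 / 2 * ∫ s in (0:ℝ)..t, ∫ y in (x - t + s)..(x + t - s),
                    |u y s| ^ p / (1 + y ^ 2) ^ ((1:ℝ) / 2) := by
  have hne : ¬ g =ᵐ[volume] 0 := by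
    rwa [hg.continuous.ae_eq_iff_eq volume continuous_zero, ← ne_eq, Function.ne_iff]
  obtain ⟨C, hC, hblowup⟩ := stmt_1_general hp hg.continuous.locallyIntegrable
    (.of_forall hgpos) hne one_pos
  exact ⟨1, one_pos, C, hC, fun ε hε hε₁ T hT hlt ⟨u, hu, heq⟩ ↦
    hblowup ε hε hε₁ T hT hlt ⟨u, hu, fun x t ht ↦ (heq x t ht).ge⟩⟩
end

section
/- Let p > 1 and a > 0. Let f ≡ 0 and let g ∈ C¹(ℝ) satisfy g ≥ 0 on ℝ, g not identically zero, and ∫_{−1}^{1} g(y) dy > 0. Then there exist positive constants ε₀ = ε₀(g,a,p) and C = C(g,a,p) such that for every ε with 0 < ε ≤ ε₀ and every T > C·ε^{−(p−1)}, there is no function u ∈ C(ℝ×[0,T]) satisfying u(x,t) = (ε/2)∫_{x−t}^{x+t} g(y) dy + (1/2)∬_{D(x,t)} |u(y,s)|^p (1+y²)^{−(1+a)/2} dy ds for all (x,t) ∈ ℝ×[0,T]. In particular the lifespan satisfies T_ε ≤ C·ε^{−(p−1)}. -/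
open MeasureTheory Real Set Filter

/-!
Let `M` be a lower bound of `u` on a fixed interval `[α, β]` from some time on. The backward cone
with vertex `(x, t)`, `x ∈ [α, β]`, meets `[α, β]` at time `s` in length at least
`min (β - α) (t - s)`, so waiting a time `h` adds at least a constant times
`h * min (β - α) h * M ^ p` to `u`. Hence `M` has doubled after a waiting time of order
`M ^ (-(p - 1)) + M ^ (-(p - 1) / 2)`. Along the bounds `2 ^ j * M` these waiting times are
dominated by a geometric series, so every doubling takes place before a finite time, which is of
order `M ^ (-(p - 1))` for small `M`. The linear part of `u` provides the first bound
`M = ε / 2 * ∫ g`.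
-/

theorem continuousOn_intervalIntegral_of_continuousOn_univ_prod {X E : Type*} [TopologicalSpace X]
    [FirstCountableTopology X] [NormedAddCommGroup E] [NormedSpace ℝ E] {F : ℝ → X → E} {S : Set X}
    {c d : X → ℝ} (hF : ContinuousOn (Function.uncurry F) (univ ×ˢ S)) (hc : ContinuousOn c S)
    (hd : ContinuousOn d S) : ContinuousOn (fun s => ∫ y in c s..d s, F y s) S := by
  have hF' : Continuous (Function.uncurry fun (s : S) y => F y s) :=
    hF.comp_continuous (f := fun q : S × ℝ => (q.2, (q.1 : X))) (by fun_prop)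
      fun q => ⟨mem_univ _, q.1.2⟩
  have primitive_continuous {e : X → ℝ} (he : ContinuousOn e S) :
      Continuous fun s : S => ∫ y in (0 : ℝ)..e s, F y s :=
    intervalIntegral.continuous_parametric_intervalIntegral_of_continuous hF' he.domRestrict
  rw [continuousOn_iff_continuous_domRestrict]
  refine ((primitive_continuous hd).sub (primitive_continuous hc)).congr fun s => ?_
  have hFs : Continuous fun y => F y s := hF'.comp (continuous_const.prodMk continuous_id)
  exact intervalIntegral.integral_interval_sub_left (hFs.intervalIntegrable _ _)
    (hFs.intervalIntegrable _ _)

theorem mul_le_intervalIntegral_of_forall_mem_Icc_le {f : ℝ → ℝ} {a b c d B : ℝ}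
    (hf : IntervalIntegrable f volume a b) (hf0 : ∀ y ∈ Ioc a b, 0 ≤ f y) (hac : a ≤ c)
    (hcd : c ≤ d) (hdb : d ≤ b) (hB : ∀ y ∈ Icc c d, B ≤ f y) :
    (d - c) * B ≤ ∫ y in a..b, f y := by
  have hab : a ≤ b := hac.trans (hcd.trans hdb)
  have hfcd : IntervalIntegrable f volume c d :=
    hf.mono_set (by rw [uIcc_of_le hcd, uIcc_of_le hab]; exact Icc_subset_Icc hac hdb)
  calc (d - c) * B = ∫ _ in c..d, B := by simp
    _ ≤ ∫ y in c..d, f y := intervalIntegral.integral_mono_on hcd (by simp) hfcd hB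
    _ ≤ ∫ y in a..b, f y := intervalIntegral.integral_mono_interval hac hcd hdb
        ((ae_restrict_iff' measurableSet_Ioc).2 (Eventually.of_forall hf0)) hf

theorem lt_of_intervalIntegral_pos {f : ℝ → ℝ} {a b : ℝ} (hf : ∀ x, 0 ≤ f x)
    (h : 0 < ∫ x in a..b, f x) : a < b := by
  by_contra! hba
  rw [intervalIntegral.integral_symm, neg_pos] at h
  exact h.not_ge (intervalIntegral.integral_nonneg hba fun x _ => hf x)

theorem intervalIntegral_le_intervalIntegral_sub_add {f : ℝ → ℝ} {α β x t : ℝ}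
    (hf : LocallyIntegrable f) (hf0 : ∀ y, 0 ≤ f y) (hx : x ∈ Icc α β) (ht : β - α ≤ t) :
    ∫ y in α..β, f y ≤ ∫ y in (x - t)..(x + t), f y :=
  intervalIntegral.integral_mono_interval (by linarith [hx.2]) (hx.1.trans hx.2)
    (by linarith [hx.1]) (Eventually.of_forall hf0)
    (hf.integrableOn_isCompact isCompact_uIcc).intervalIntegrable

theorem continuous_inv_one_add_sq_rpow (b : ℝ) :
    Continuous fun y : ℝ => ((1 + y ^ 2) ^ b)⁻¹ :=
  ((by fun_prop : Continuous fun y : ℝ => 1 + y ^ 2).rpow_const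
    fun y => Or.inl (by positivity)).inv₀ fun y => by positivity

/-- The integral of `F` over the backward light cone `D(x, t)`, written as an iterated integral. -/
noncomputable def coneIntegral (F : ℝ → ℝ → ℝ) (x t : ℝ) : ℝ :=
  ∫ s in (0 : ℝ)..t, ∫ y in (x - t + s)..(x + t - s), F y s

section ConeIntegral

variable {F : ℝ → ℝ → ℝ} {α β x t τ h B : ℝ}

theorem min_mul_le_intervalIntegral_of_mem_Icc {f : ℝ → ℝ} {r : ℝ}
    (hf : IntervalIntegrable f volume (x - r) (x + r)) (hf0 : ∀ y, 0 ≤ f y) (hx : x ∈ Icc α β)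
    (hr : 0 ≤ r) (hB : ∀ y ∈ Icc α β, B ≤ f y) :
    min (β - α) r * B ≤ ∫ y in (x - r)..(x + r), f y := by
  obtain ⟨hαx, hxβ⟩ := hx
  set m := min (β - α) r
  have hm0 : 0 ≤ m := le_min (by linarith) hr
  have hmαβ : m ≤ β - α := min_le_left _ _
  have hmr : m ≤ r := min_le_right _ _
  have hβ : max α (x - m) + m ≤ β := by
    rw [max_add, sub_add_cancel]; exact max_le (by linarith) hxβ
  have hcx : max α (x - m) ≤ x := max_le hαx (by linarith)
  calc m * B = (max α (x - m) + m - max α (x - m)) * B := by ring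
    _ ≤ ∫ y in (x - r)..(x + r), f y :=
      mul_le_intervalIntegral_of_forall_mem_Icc_le hf (fun y _ => hf0 y)
        (by linarith [le_max_right α (x - m)]) (by linarith) (by linarith)
        fun y hy => hB y ⟨(le_max_left _ _).trans hy.1, hy.2.trans hβ⟩

theorem mul_le_coneIntegral (hF : ContinuousOn (Function.uncurry F) (univ ×ˢ Icc 0 t))
    (hF0 : ∀ y s, 0 ≤ F y s) (hx : x ∈ Icc α β) (hτ : 0 ≤ τ) (hh : 0 ≤ h) (ht : τ + h ≤ t)
    (hB : 0 ≤ B) (hFB : ∀ y ∈ Icc α β, ∀ s ∈ Icc τ t, B ≤ F y s) :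
    h / 2 * (min (β - α) (h / 2) * B) ≤ coneIntegral F x t := by
  have slice_continuous : ContinuousOn (fun s => ∫ y in (x - t + s)..(x + t - s), F y s)
      (Icc 0 t) :=
    continuousOn_intervalIntegral_of_continuousOn_univ_prod hF (by fun_prop) (by fun_prop)
  have slice_nonneg : ∀ s ∈ Ioc 0 t, 0 ≤ ∫ y in (x - t + s)..(x + t - s), F y s := fun s hs =>
    intervalIntegral.integral_nonneg (by linarith [hs.2]) fun y _ => hF0 y s
  have slice_lower : ∀ s ∈ Icc τ (τ + h / 2),
      min (β - α) (h / 2) * B ≤ ∫ y in (x - t + s)..(x + t - s), F y s := by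
    rintro s ⟨hτs, hsh⟩
    have hFs : Continuous fun y => F y s :=
      hF.comp_continuous (f := fun y : ℝ => (y, s)) (by fun_prop)
        fun y => ⟨mem_univ _, by linarith, by linarith⟩
    calc min (β - α) (h / 2) * B ≤ min (β - α) (t - s) * B := by gcongr; linarith
      _ ≤ ∫ y in (x - (t - s))..(x + (t - s)), F y s :=
        min_mul_le_intervalIntegral_of_mem_Icc (hFs.intervalIntegrable _ _) (hF0 · s) hx
          (by linarith) fun y hy => hFB y hy s ⟨hτs, by linarith⟩
      _ = ∫ y in (x - t + s)..(x + t - s), F y s := by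
        rw [← sub_add, ← add_sub_assoc]
  calc h / 2 * (min (β - α) (h / 2) * B)
      = (τ + h / 2 - τ) * (min (β - α) (h / 2) * B) := by ring
    _ ≤ coneIntegral F x t :=
      mul_le_intervalIntegral_of_forall_mem_Icc_le
        (slice_continuous.intervalIntegrable_of_Icc (by linarith)) slice_nonneg hτ (by linarith)
        (by linarith) slice_lower

theorem coneIntegral_nonneg (hF0 : ∀ y s, 0 ≤ F y s) (ht : 0 ≤ t) : 0 ≤ coneIntegral F x t :=
  intervalIntegral.integral_nonneg ht fun s hs =>
    intervalIntegral.integral_nonneg (by linarith [hs.2]) fun y _ => hF0 y s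

end ConeIntegral

/-- A waiting time after which a lower bound `M` of a supersolution on an interval of length `ℓ`,
where the weight is at least `w`, has become `2 * M`; here `r = p - 1`. The first summand wins for
small `M`, where the cone covers the whole interval, and the second one for large `M`. -/
noncomputable def doublingTime (r ℓ w M : ℝ) : ℝ :=
  8 / (ℓ * w) * M ^ (-r) + 4 / √w * M ^ (-(r / 2))

section DoublingTime

variable {r ℓ w M k : ℝ}

theorem doublingTime_nonneg (hℓ : 0 ≤ ℓ) (hw : 0 ≤ w) (hM : 0 ≤ M) :
    0 ≤ doublingTime r ℓ w M := by
  unfold doublingTime; positivity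

theorem four_le_doublingTime_mul_min (hℓ : 0 < ℓ) (hw : 0 < w) (hM : 0 < M) :
    4 ≤ doublingTime r ℓ w M / 2 * (min ℓ (doublingTime r ℓ w M / 2) * (w * M ^ r)) := by
  set h := doublingTime r ℓ w M with hh
  have hfirst : 4 / (ℓ * w) * M ^ (-r) ≤ h / 2 := by
    have : 0 ≤ 4 / √w * M ^ (-(r / 2)) := by positivity
    rw [hh, doublingTime]; linear_combination this / 2
  have hsecond : 2 / √w * M ^ (-(r / 2)) ≤ h / 2 := by
    have : 0 ≤ 8 / (ℓ * w) * M ^ (-r) := by positivity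
    rw [hh, doublingTime]; linear_combination this / 2
  have hMr : M ^ (-r) * M ^ r = 1 := by rw [← rpow_add hM]; simp
  rcases min_choice ℓ (h / 2) with hmin | hmin <;> rw [hmin]
  · calc 4 = 4 / (ℓ * w) * M ^ (-r) * (ℓ * (w * M ^ r)) := by
          field_simp; exact hMr.symm
      _ ≤ h / 2 * (ℓ * (w * M ^ r)) := by gcongr
  · have hsq : (M ^ (-(r / 2))) ^ 2 = M ^ (-r) := by
      rw [← rpow_mul_natCast hM.le]; congr 1; push_cast; ring
    calc 4 = (2 / √w * M ^ (-(r / 2))) ^ 2 * (w * M ^ r) := by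
          rw [mul_pow, div_pow, sq_sqrt hw.le, hsq]; field_simp; linear_combination -4 * hMr
      _ ≤ (h / 2) ^ 2 * (w * M ^ r) := by gcongr
      _ = h / 2 * (h / 2 * (w * M ^ r)) := by ring

theorem doublingTime_mul_le_of_one_le (hr : 0 ≤ r) (hℓ : 0 ≤ ℓ) (hw : 0 ≤ w) (hM : 0 ≤ M)
    (hk : 1 ≤ k) : doublingTime r ℓ w (k * M) ≤ k ^ (-(r / 2)) * doublingTime r ℓ w M := by
  have hk0 : 0 ≤ k := by linarith
  have hkr : k ^ (-r) ≤ k ^ (-(r / 2)) := rpow_le_rpow_of_exponent_le hk (by linarith)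
  calc doublingTime r ℓ w (k * M)
      = 8 / (ℓ * w) * (k ^ (-r) * M ^ (-r)) + 4 / √w * (k ^ (-(r / 2)) * M ^ (-(r / 2))) := by
        rw [doublingTime, mul_rpow hk0 hM, mul_rpow hk0 hM]
    _ ≤ 8 / (ℓ * w) * (k ^ (-(r / 2)) * M ^ (-r))
          + 4 / √w * (k ^ (-(r / 2)) * M ^ (-(r / 2))) := by gcongr
    _ = k ^ (-(r / 2)) * doublingTime r ℓ w M := by rw [doublingTime]; ring

theorem doublingTime_mul_le_of_le_one (hr : 0 ≤ r) (hM : 0 ≤ M) (hk : 0 < k) (hk1 : k ≤ 1) :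
    doublingTime r ℓ w (k * M) ≤ k ^ (-r) * doublingTime r ℓ w M := by
  have hkr : k ^ (-(r / 2)) ≤ k ^ (-r) := rpow_le_rpow_of_exponent_ge hk hk1 (by linarith)
  calc doublingTime r ℓ w (k * M)
      = 8 / (ℓ * w) * (k ^ (-r) * M ^ (-r)) + 4 / √w * (k ^ (-(r / 2)) * M ^ (-(r / 2))) := by
        rw [doublingTime, mul_rpow hk.le hM, mul_rpow hk.le hM]
    _ ≤ 8 / (ℓ * w) * (k ^ (-r) * M ^ (-r)) + 4 / √w * (k ^ (-r) * M ^ (-(r / 2))) := by gcongr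
    _ = k ^ (-r) * doublingTime r ℓ w M := by rw [doublingTime]; ring

/-- An upper bound for the total waiting time of all the doublings that start from the lower bound
`M`, obtained by summing the geometric series that dominates `doublingTime r ℓ w (2 ^ i * M)`. -/
noncomputable def blowUpTime (r ℓ w M : ℝ) : ℝ :=
  doublingTime r ℓ w M / (1 - 2 ^ (-(r / 2)))

theorem one_sub_two_rpow_neg_half_pos (hr : 0 < r) : 0 < 1 - (2 : ℝ) ^ (-(r / 2)) :=
  sub_pos.2 (rpow_lt_one_of_one_lt_of_neg one_lt_two (by linarith))

theorem blowUpTime_nonneg (hr : 0 < r) (hℓ : 0 ≤ ℓ) (hw : 0 ≤ w) (hM : 0 ≤ M) :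
    0 ≤ blowUpTime r ℓ w M :=
  div_nonneg (doublingTime_nonneg hℓ hw hM) (one_sub_two_rpow_neg_half_pos hr).le

theorem sum_doublingTime_le_blowUpTime (hr : 0 < r) (hℓ : 0 ≤ ℓ) (hw : 0 ≤ w) (hM : 0 ≤ M)
    (n : ℕ) : ∑ i ∈ Finset.range n, doublingTime r ℓ w (2 ^ i * M) ≤ blowUpTime r ℓ w M := by
  set ρ : ℝ := 2 ^ (-(r / 2)) with hρ
  have hρ0 : 0 ≤ ρ := by positivity
  have hρ1 : ρ < 1 := sub_pos.1 (one_sub_two_rpow_neg_half_pos hr)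
  have hD : 0 ≤ doublingTime r ℓ w M := doublingTime_nonneg hℓ hw hM
  have hterm (i : ℕ) : doublingTime r ℓ w (2 ^ i * M) ≤ ρ ^ i * doublingTime r ℓ w M := by
    rw [hρ, rpow_pow_comm zero_le_two]
    exact doublingTime_mul_le_of_one_le hr.le hℓ hw hM (one_le_pow₀ one_le_two)
  have hgeom : ∑ i ∈ Finset.range n, ρ ^ i ≤ (1 - ρ)⁻¹ := by
    rw [← tsum_geometric_of_lt_one hρ0 hρ1]
    exact (summable_geometric_of_lt_one hρ0 hρ1).sum_le_tsum _ fun i _ => by positivity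
  calc ∑ i ∈ Finset.range n, doublingTime r ℓ w (2 ^ i * M)
      ≤ ∑ i ∈ Finset.range n, ρ ^ i * doublingTime r ℓ w M := Finset.sum_le_sum fun i _ => hterm i
    _ = (∑ i ∈ Finset.range n, ρ ^ i) * doublingTime r ℓ w M := (Finset.sum_mul ..).symm
    _ ≤ (1 - ρ)⁻¹ * doublingTime r ℓ w M := by gcongr
    _ = blowUpTime r ℓ w M := by rw [blowUpTime, div_eq_inv_mul]

theorem blowUpTime_mul_le_of_le_one (hr : 0 < r) (hM : 0 ≤ M) (hk : 0 < k) (hk1 : k ≤ 1) :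
    blowUpTime r ℓ w (k * M) ≤ k ^ (-r) * blowUpTime r ℓ w M := by
  rw [blowUpTime, blowUpTime, ← mul_div_assoc]
  exact div_le_div_of_nonneg_right (doublingTime_mul_le_of_le_one hr.le hM hk hk1)
    (one_sub_two_rpow_neg_half_pos hr).le

end DoublingTime

/-- `u` is a continuous supersolution on `ℝ × [0, T]` of the integral form of
`u_tt - u_xx = |u| ^ p * W`, where `v` is the free solution with the same initial data as `u`. -/
structure IsSupersolution (p : ℝ) (W : ℝ → ℝ) (v : ℝ → ℝ → ℝ) (T : ℝ) (u : ℝ → ℝ → ℝ) : Prop where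
  continuousOn : ContinuousOn (Function.uncurry u) (univ ×ˢ Icc 0 T)
  le : ∀ x, ∀ t ∈ Icc 0 T, v x t + 1 / 2 * coneIntegral (fun y s => |u y s| ^ p * W y) x t ≤ u x t

namespace IsSupersolution

variable {p T w M α β τ : ℝ} {W : ℝ → ℝ} {v u : ℝ → ℝ → ℝ}

theorem free_le (hu : IsSupersolution p W v T u) (hW : ∀ y, 0 ≤ W y) {x t : ℝ}
    (ht : t ∈ Icc 0 T) : v x t ≤ u x t := by
  have hcone : 0 ≤ coneIntegral (fun y s => |u y s| ^ p * W y) x t :=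
    coneIntegral_nonneg (fun y s => mul_nonneg (by positivity) (hW y)) ht.1
  linarith [hu.le x t ht]

theorem two_mul_le (hu : IsSupersolution p W v T u) (hp : 0 ≤ p) (hWc : Continuous W)
    (hW : ∀ y, 0 ≤ W y) (hw : 0 < w) (hwW : ∀ y ∈ Icc α β, w ≤ W y) (hαβ : α < β) (hτ : 0 ≤ τ)
    (hv : ∀ x ∈ Icc α β, ∀ t ∈ Icc τ T, 0 ≤ v x t) (hM : 0 < M)
    (hMu : ∀ x ∈ Icc α β, ∀ t ∈ Icc τ T, M ≤ u x t) :
    ∀ x ∈ Icc α β, ∀ t ∈ Icc (τ + doublingTime (p - 1) (β - α) w M) T, 2 * M ≤ u x t := by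
  rintro x hx t ⟨hτt, htT⟩
  set h := doublingTime (p - 1) (β - α) w M
  have hh : 0 ≤ h := doublingTime_nonneg (by linarith) hw.le hM.le
  have source_continuous :
      ContinuousOn (Function.uncurry fun y s => |u y s| ^ p * W y) (univ ×ˢ Icc 0 t) :=
    ((hu.continuousOn.mono (prod_mono_right (Icc_subset_Icc_right htT))).abs.rpow_const
      fun _ _ => Or.inr hp).mul (hWc.comp continuous_fst).continuousOn
  have source_lower : ∀ y ∈ Icc α β, ∀ s ∈ Icc τ t, M ^ p * w ≤ |u y s| ^ p * W y := by
    intro y hy s hs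
    have hMus : M ≤ |u y s| := (hMu y hy s ⟨hs.1, hs.2.trans htT⟩).trans (le_abs_self _)
    gcongr
    exact hwW y hy
  have hMp : M ^ p = M * M ^ (p - 1) := by rw [rpow_sub_one hM.ne']; field_simp
  calc 2 * M ≤ 1 / 2 * (h / 2 * (min (β - α) (h / 2) * (w * M ^ (p - 1))) * M) := by
        linarith [mul_le_mul_of_nonneg_right
          (four_le_doublingTime_mul_min (r := p - 1) (sub_pos.2 hαβ) hw hM) hM.le]
    _ = 1 / 2 * (h / 2 * (min (β - α) (h / 2) * (M ^ p * w))) := by rw [hMp]; ring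
    _ ≤ 1 / 2 * coneIntegral (fun y s => |u y s| ^ p * W y) x t := by
        gcongr
        exact mul_le_coneIntegral source_continuous (fun y s => mul_nonneg (by positivity) (hW y))
          hx hτ hh hτt (by positivity) source_lower
    _ ≤ u x t := by linarith [hv x hx t ⟨by linarith, htT⟩, hu.le x t ⟨by linarith, htT⟩]

theorem two_pow_mul_le (hu : IsSupersolution p W v T u) (hp : 0 ≤ p) (hWc : Continuous W)
    (hW : ∀ y, 0 ≤ W y) (hw : 0 < w) (hwW : ∀ y ∈ Icc α β, w ≤ W y) (hαβ : α < β) (hτ : 0 ≤ τ)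
    (hM : 0 < M) (hMv : ∀ x ∈ Icc α β, ∀ t ∈ Icc τ T, M ≤ v x t) (n : ℕ) :
    ∀ x ∈ Icc α β, ∀ t ∈
      Icc (τ + ∑ i ∈ Finset.range n, doublingTime (p - 1) (β - α) w (2 ^ i * M)) T,
      2 ^ n * M ≤ u x t := by
  induction n with
  | zero =>
    intro x hx t ht
    rw [Finset.sum_range_zero, add_zero] at ht
    simpa using (hMv x hx t ht).trans (hu.free_le hW ⟨hτ.trans ht.1, ht.2⟩)
  | succ n ih =>
    have hsum : 0 ≤ ∑ i ∈ Finset.range n, doublingTime (p - 1) (β - α) w (2 ^ i * M) :=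
      Finset.sum_nonneg fun i _ => doublingTime_nonneg (by linarith) hw.le (by positivity)
    rw [Finset.sum_range_succ, ← add_assoc, pow_succ', mul_assoc]
    refine hu.two_mul_le hp hWc hW hw hwW hαβ (by linarith) (fun x hx t ht => ?_)
      (by positivity) ih
    exact hM.le.trans (hMv x hx t ⟨by linarith [ht.1], ht.2⟩)

theorem time_le (hu : IsSupersolution p W v T u) (hp : 1 < p) (hWc : Continuous W)
    (hW : ∀ y, 0 ≤ W y) (hw : 0 < w) (hwW : ∀ y ∈ Icc α β, w ≤ W y) (hαβ : α < β) (hτ : 0 ≤ τ)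
    (hM : 0 < M) (hMv : ∀ x ∈ Icc α β, ∀ t ∈ Icc τ T, M ≤ v x t) :
    T ≤ τ + blowUpTime (p - 1) (β - α) w M := by
  by_contra! hT
  obtain ⟨n, hn⟩ := pow_unbounded_of_one_lt (u α T / M) one_lt_two
  have hsum := sum_doublingTime_le_blowUpTime (sub_pos.2 hp) (sub_pos.2 hαβ).le hw.le hM.le n
  have hlower : 2 ^ n * M ≤ u α T :=
    hu.two_pow_mul_le (by linarith) hWc hW hw hwW hαβ hτ hM hMv n α (left_mem_Icc.2 hαβ.le) T
      ⟨by linarith, le_rfl⟩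
  exact hlower.not_gt ((div_lt_iff₀ hM).1 hn)

end IsSupersolution

theorem stmt_2_general {p α β ε₀ : ℝ} {W g : ℝ → ℝ} (hp : 1 < p) (hWc : Continuous W)
    (hW : ∀ y, 0 ≤ W y) (hWpos : ∀ y ∈ Icc α β, 0 < W y) (hg : LocallyIntegrable g)
    (hgpos : ∀ x, 0 ≤ g x) (hgint : 0 < ∫ y in α..β, g y) (hε₀ : 0 < ε₀) :
    ∃ C > 0, ∀ ε, 0 < ε → ε ≤ ε₀ → ∀ T, C * ε ^ (-(p - 1)) < T →
      ¬ ∃ u, IsSupersolution p W (fun x t => ε / 2 * ∫ y in (x - t)..(x + t), g y) T u := by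
  have hαβ : α < β := lt_of_intervalIntegral_pos hgpos hgint
  obtain ⟨y₀, hy₀, hmin⟩ :=
    isCompact_Icc.exists_isMinOn (nonempty_Icc.2 hαβ.le) hWc.continuousOn
  have hw : 0 < W y₀ := hWpos y₀ hy₀
  have hr : 0 < p - 1 := sub_pos.2 hp
  have hℓ : 0 < β - α := sub_pos.2 hαβ
  set G := ∫ y in α..β, g y
  set S := blowUpTime (p - 1) (β - α) (W y₀)
  have hS : 0 ≤ S (ε₀ / 2 * G) := blowUpTime_nonneg hr hℓ.le hw.le (by positivity)
  refine ⟨(β - α + S (ε₀ / 2 * G)) / ε₀ ^ (-(p - 1)), by positivity, ?_⟩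
  rintro ε hε hεε₀ T hT ⟨u, hu⟩
  have hfree : ∀ x ∈ Icc α β, ∀ t ∈ Icc (β - α) T,
      ε / 2 * G ≤ ε / 2 * ∫ y in (x - t)..(x + t), g y := fun x hx t ht =>
    mul_le_mul_of_nonneg_left (intervalIntegral_le_intervalIntegral_sub_add hg hgpos hx ht.1)
      (by positivity)
  have hk : 0 < ε / ε₀ := by positivity
  have hk1 : ε / ε₀ ≤ 1 := (div_le_one hε₀).2 hεε₀
  refine hT.not_ge ?_
  calc T ≤ β - α + S (ε / 2 * G) :=
        hu.time_le hp hWc hW hw hmin hαβ hℓ.le (by positivity) hfree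
    _ = β - α + S (ε / ε₀ * (ε₀ / 2 * G)) := by congr 2; field_simp
    _ ≤ (ε / ε₀) ^ (-(p - 1)) * (β - α) + (ε / ε₀) ^ (-(p - 1)) * S (ε₀ / 2 * G) :=
        add_le_add
          (le_mul_of_one_le_left hℓ.le
            (one_le_rpow_of_pos_of_le_one_of_nonpos hk hk1 (by linarith)))
          (blowUpTime_mul_le_of_le_one hr (by positivity) hk hk1)
    _ = (β - α + S (ε₀ / 2 * G)) / ε₀ ^ (-(p - 1)) * ε ^ (-(p - 1)) := by
        rw [div_rpow hε.le hε₀.le]; ring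

/-- Blow-up / upper bound of the lifespan in the case `a > 0`:
for small `ε` and `T > C ε^{-(p-1)}`, the integral equation
`u = ε u⁰ + L(|u|^p (1+y²)^{-(1+a)/2})` has no continuous solution on `ℝ × [0,T]`. -/
theorem stmt_2 (p a : ℝ) (hp : 1 < p) (ha : 0 < a)
    (g : ℝ → ℝ) (hg : ContDiff ℝ 1 g) (hgpos : ∀ x, 0 ≤ g x)
    (hgne : ∃ x, g x ≠ 0) (hgint : 0 < ∫ y in (-1:ℝ)..1, g y) :
    ∃ ε₀ > (0:ℝ), ∃ C > (0:ℝ), ∀ ε : ℝ, 0 < ε → ε ≤ ε₀ →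
      ∀ T : ℝ, C * ε ^ (-(p - 1)) < T →
        ¬ ∃ u : ℝ → ℝ → ℝ,
            ContinuousOn (fun q : ℝ × ℝ => u q.1 q.2) (Set.univ ×ˢ Set.Icc 0 T) ∧
            ∀ x t : ℝ, t ∈ Set.Icc (0:ℝ) T →
              u x t = ε / 2 * (∫ y in (x - t)..(x + t), g y)
                + 1 / 2 * ∫ s in (0:ℝ)..t, ∫ y in (x - t + s)..(x + t - s),
                    |u y s| ^ p / (1 + y ^ 2) ^ ((1 + a) / 2) := by
  obtain ⟨C, hC, hblow⟩ := stmt_2_general hp (continuous_inv_one_add_sq_rpow ((1 + a) / 2))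
    (fun y => by positivity) (fun y _ => by positivity) hg.continuous.locallyIntegrable hgpos hgint
    one_pos
  refine ⟨1, one_pos, C, hC, fun ε hε hε₁ T hT ⟨u, hcont, hsol⟩ =>
    hblow ε hε hε₁ T hT ⟨u, hcont, fun x t ht => ?_⟩⟩
  simpa only [coneIntegral, div_eq_mul_inv] using (hsol x t ht).ge
end

section
/- Let p > 1 and a = 0, and let F(u) = |u|^{p−1}u or F(u) = |u|^p. Let f ∈ C²(ℝ) with ‖f‖_{L∞(ℝ)} < ∞ and g ∈ C¹(ℝ) with ‖g‖_{L¹(ℝ)} < ∞. Then there exists a positive constant c = c(f,g,p) such that for every ε > 0 and every T with 0 < T ≤ φ^{−1}(c·ε^{−(p−1)}), there exists a bounded continuous function u on ℝ×[0,T] satisfying the integral equation u(x,t) = ε·u⁰(x,t) + (1/2)∬_{D(x,t)} F(u(y,s))·(1+y²)^{−1/2} dy ds for all (x,t) ∈ ℝ×[0,T]. In particular the lifespan satisfies T_ε ≥ φ^{−1}(c·ε^{−(p−1)}). -/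
open MeasureTheory Real Set Filter

/-!
Let `L H (x, t)` be half the integral of `H` over the backward triangle `D(x, t)`. If
`|H(y, s)| ≤ A (1 + y²)^{-1/2}`, then each horizontal slice of `D(x, t)` with `t ≤ T` has length at
most `2T` and contributes at most `A (arsinh b - arsinh a) ≤ 2 A arsinh T ≤ 4 A log (2 + T)`, hence
`|L H (x, t)| ≤ 2 A T log (2 + T)`. On the ball of radius `R = 2εM`, where `M` bounds `u⁰`, the
nonlinearity has Lipschitz constant of order `R^{p-1} ~ ε^{p-1}`. Therefore
`u ↦ ε u⁰ + L(F(u) (1 + y²)^{-1/2})` maps this ball to itself and is a contraction as long as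
`ε^{p-1} T log (2 + T)` is small.
-/

open Metric
open scoped NNReal BoundedContinuousFunction

variable {E : Type*} [NormedAddCommGroup E]

section UniformContraction

variable {X : Type*} [TopologicalSpace X]

lemma exists_fixedPoint_of_uniform_contraction [CompleteSpace E] {Φ : (X → E) → X → E} {R : ℝ}
    {θ : ℝ≥0} (hR : 0 ≤ R) (hθ : θ < 1)
    (hΦ_maps : MapsTo Φ {v | Continuous v ∧ ∀ q, ‖v q‖ ≤ R} {v | Continuous v ∧ ∀ q, ‖v q‖ ≤ R})
    (hΦ_contr : ∀ u v, Continuous u → Continuous v → (∀ q, ‖u q‖ ≤ R) → (∀ q, ‖v q‖ ≤ R) →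
      ∀ δ, (∀ q, ‖u q - v q‖ ≤ δ) → ∀ q, ‖Φ u q - Φ v q‖ ≤ θ * δ) :
    ∃ u, Continuous u ∧ (∀ q, ‖u q‖ ≤ R) ∧ Φ u = u := by
  let B : Set (X →ᵇ E) := closedBall 0 R
  have hB (v : B) : Continuous v.1 ∧ ∀ q, ‖v.1 q‖ ≤ R :=
    ⟨v.1.continuous, fun q =>
      (v.1.norm_coe_le_norm q).trans (mem_closedBall_zero_iff.1 v.2)⟩
  let N (v : B) : B :=
    ⟨.ofNormedAddCommGroup (Φ v.1) (hΦ_maps (hB v)).1 R (hΦ_maps (hB v)).2,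
      mem_closedBall_zero_iff.2 (BoundedContinuousFunction.norm_ofNormedAddCommGroup_le _ hR _)⟩
  have hN : ContractingWith θ N := by
    refine ⟨hθ, LipschitzWith.of_dist_le_mul fun u v => ?_⟩
    refine (BoundedContinuousFunction.dist_le (by positivity)).2 fun q => ?_
    rw [dist_eq_norm]
    exact hΦ_contr u.1 v.1 (hB u).1 (hB v).1 (hB u).2 (hB v).2 _
      (fun q => (dist_eq_norm (u.1 q) (v.1 q)).symm.trans_le
        (BoundedContinuousFunction.dist_coe_le_dist q)) q
  have : CompleteSpace B := isClosed_closedBall.completeSpace_coe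
  have : Nonempty B := ⟨0, mem_closedBall_self hR⟩
  let u := ContractingWith.fixedPoint N hN
  have hu : N u = u := hN.fixedPoint_isFixedPt
  exact ⟨u.1, (hB u).1, (hB u).2, congrArg (fun v : B => (v.1 : X → E)) hu⟩

end UniformContraction

section PowerNonlinearity

lemma rpow_sub_rpow_le_mul_sub {p a b : ℝ} (hp : 1 ≤ p) (ha : 0 ≤ a) (hab : a ≤ b) :
    b ^ p - a ^ p ≤ p * b ^ (p - 1) * (b - a) := by
  rcases hab.eq_or_lt with rfl | hlt
  · simp
  · have hslope := (convexOn_rpow hp).slope_le_of_hasDerivAt (mem_Ici.2 ha)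
      (mem_Ici.2 (ha.trans hab)) hlt (hasDerivAt_rpow_const (Or.inr hp))
    rwa [slope_def_field, div_le_iff₀ (sub_pos.2 hlt)] at hslope

lemma abs_norm_rpow_sub_norm_rpow_le {p : ℝ} (hp : 1 ≤ p) (r s : E) :
    |‖r‖ ^ p - ‖s‖ ^ p| ≤ p * max ‖r‖ ‖s‖ ^ (p - 1) * ‖r - s‖ := by
  wlog hsr : ‖s‖ ≤ ‖r‖ generalizing r s
  · rw [abs_sub_comm, max_comm, norm_sub_rev]
    exact this s r (le_of_not_ge hsr)
  have hmono : ‖s‖ ^ p ≤ ‖r‖ ^ p := rpow_le_rpow (norm_nonneg s) hsr (by linarith)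
  rw [abs_of_nonneg (sub_nonneg.2 hmono), max_eq_left hsr]
  calc ‖r‖ ^ p - ‖s‖ ^ p ≤ p * ‖r‖ ^ (p - 1) * (‖r‖ - ‖s‖) :=
        rpow_sub_rpow_le_mul_sub hp (norm_nonneg s) hsr
    _ ≤ p * ‖r‖ ^ (p - 1) * ‖r - s‖ := by gcongr; exact norm_sub_norm_le r s

lemma norm_norm_rpow_smul_sub_le [NormedSpace ℝ E] {p : ℝ} (hp : 1 ≤ p) (r s : E) :
    ‖‖r‖ ^ (p - 1) • r - ‖s‖ ^ (p - 1) • s‖ ≤ p * max ‖r‖ ‖s‖ ^ (p - 1) * ‖r - s‖ := by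
  wlog hsr : ‖s‖ ≤ ‖r‖ generalizing r s
  · rw [norm_sub_rev, max_comm, norm_sub_rev r s]
    exact this s r (le_of_not_ge hsr)
  have hmono : ‖s‖ ^ (p - 1) ≤ ‖r‖ ^ (p - 1) :=
    rpow_le_rpow (norm_nonneg s) hsr (by linarith)
  have hpow (z : E) : ‖z‖ ^ (p - 1) * ‖z‖ = ‖z‖ ^ p := by
    rw [← rpow_add_one' (norm_nonneg z) (by linarith), sub_add_cancel]
  have hsplit : ‖r‖ ^ (p - 1) • r - ‖s‖ ^ (p - 1) • s
      = ‖s‖ ^ (p - 1) • (r - s) + (‖r‖ ^ (p - 1) - ‖s‖ ^ (p - 1)) • r := by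
    module
  have htri : ‖‖r‖ ^ (p - 1) • r - ‖s‖ ^ (p - 1) • s‖
      ≤ ‖s‖ ^ (p - 1) * ‖r - s‖ + (‖r‖ ^ (p - 1) - ‖s‖ ^ (p - 1)) * ‖r‖ := by
    rw [hsplit]
    refine (norm_add_le _ _).trans_eq ?_
    rw [norm_smul, norm_smul, norm_of_nonneg (sub_nonneg.2 hmono), norm_of_nonneg (by positivity)]
  have hcoeff : ‖s‖ ^ (p - 1) ≤ p * ‖r‖ ^ (p - 1) :=
    hmono.trans (le_mul_of_one_le_left (by positivity) hp)
  rw [max_eq_left hsr]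
  calc ‖‖r‖ ^ (p - 1) • r - ‖s‖ ^ (p - 1) • s‖
      ≤ ‖s‖ ^ (p - 1) * (‖r - s‖ - (‖r‖ - ‖s‖)) + (‖r‖ ^ p - ‖s‖ ^ p) := by
        rw [← hpow r, ← hpow s]; linarith
    _ ≤ p * ‖r‖ ^ (p - 1) * (‖r - s‖ - (‖r‖ - ‖s‖)) + p * ‖r‖ ^ (p - 1) * (‖r‖ - ‖s‖) :=
        add_le_add
          (mul_le_mul_of_nonneg_right hcoeff (sub_nonneg.2 (norm_sub_norm_le r s)))
          (rpow_sub_rpow_le_mul_sub hp (norm_nonneg s) hsr)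
    _ = p * ‖r‖ ^ (p - 1) * ‖r - s‖ := by ring

lemma lipschitzOnWith_closedBall_of_norm_sub_le {E' : Type*} [NormedAddCommGroup E'] {F : E → E'}
    {p C : ℝ} (hp : 1 ≤ p) (hC : 0 ≤ C)
    (hF : ∀ r s, ‖F r - F s‖ ≤ C * max ‖r‖ ‖s‖ ^ (p - 1) * ‖r - s‖) (R : ℝ) :
    LipschitzOnWith (C * R ^ (p - 1)).toNNReal F (closedBall 0 R) := by
  refine LipschitzOnWith.of_dist_le_mul fun r hr s hs => ?_
  rw [mem_closedBall_zero_iff] at hr hs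
  rw [dist_eq_norm, dist_eq_norm]
  refine (hF r s).trans (mul_le_mul_of_nonneg_right ?_ (norm_nonneg _))
  refine le_trans ?_ (le_coe_toNNReal _)
  gcongr
  exact max_le hr hs

/-- `F` is one of the two power nonlinearities `|u|^{p-1} u` and `|u|^p` of the wave equation. -/
def IsPowerNonlinearity (p : ℝ) (F : ℝ → ℝ) : Prop :=
  (∀ s, F s = |s| ^ (p - 1) * s) ∨ ∀ s, F s = |s| ^ p

namespace IsPowerNonlinearity

variable {p : ℝ} {F : ℝ → ℝ}

lemma map_zero (hF : IsPowerNonlinearity p F) (hp : p ≠ 0) : F 0 = 0 := by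
  rcases hF with hF | hF <;> simp [hF, zero_rpow hp]

lemma norm_sub_le (hF : IsPowerNonlinearity p F) (hp : 1 ≤ p) (r s : ℝ) :
    ‖F r - F s‖ ≤ p * max ‖r‖ ‖s‖ ^ (p - 1) * ‖r - s‖ := by
  rcases hF with hF | hF
  · simpa only [hF] using! norm_norm_rpow_smul_sub_le hp r s
  · simpa only [hF] using! abs_norm_rpow_sub_norm_rpow_le hp r s

end IsPowerNonlinearity

end PowerNonlinearity

section Window

/-- The integrals of `W` over intervals of length at most `ℓ` are bounded by `κ`. With `ℓ = 2T` this
controls the weight `W` on the horizontal slices of the triangles `D(x, t)`, `t ≤ T`. -/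
def WindowIntegralLE (W : ℝ → ℝ) (ℓ κ : ℝ) : Prop :=
  ∀ a b, a ≤ b → b - a ≤ ℓ → ∫ y in a..b, W y ≤ κ

lemma WindowIntegralLE.nonneg {W : ℝ → ℝ} {ℓ κ : ℝ} (h : WindowIntegralLE W ℓ κ) (hℓ : 0 ≤ ℓ) :
    0 ≤ κ := by
  simpa using h 0 0 le_rfl (by simpa using hℓ)

lemma WindowIntegralLE.const_mul {W : ℝ → ℝ} {ℓ κ A : ℝ} (h : WindowIntegralLE W ℓ κ)
    (hA : 0 ≤ A) : WindowIntegralLE (fun y => A * W y) ℓ (A * κ) := by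
  intro a b hab hℓ
  rw [intervalIntegral.integral_const_mul]
  exact mul_le_mul_of_nonneg_left (h a b hab hℓ) hA

lemma arsinh_sub_arsinh_le {a b : ℝ} (hab : a ≤ b) :
    arsinh b - arsinh a ≤ 2 * arsinh ((b - a) / 2) := by
  set α := (arsinh b + arsinh a) / 2 with hα
  set β := (arsinh b - arsinh a) / 2 with hβ
  have hsum : b - a = 2 * cosh α * sinh β := by
    have hb : b = sinh (α + β) := by rw [← sinh_arsinh b]; congr 1; rw [hα, hβ]; ring
    have ha : a = sinh (α - β) := by rw [← sinh_arsinh a]; congr 1; rw [hα, hβ]; ring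
    rw [hb, ha, sinh_add, sinh_sub]
    ring
  have hsinh0 : 0 ≤ sinh β := sinh_nonneg_iff.2 (by linarith [arsinh_le_arsinh.2 hab])
  have hsinh : sinh β ≤ (b - a) / 2 := by
    linarith [le_mul_of_one_le_left hsinh0 (one_le_cosh α)]
  have hle : β ≤ arsinh ((b - a) / 2) := by
    simpa only [arsinh_sinh] using arsinh_le_arsinh.2 hsinh
  linarith

lemma arsinh_le_two_mul_log_two_add {x : ℝ} (hx : 0 ≤ x) : arsinh x ≤ 2 * log (2 + x) := by
  have hsqrt : √(1 + x ^ 2) ≤ 1 + x := sqrt_le_iff.2 ⟨by linarith, by nlinarith⟩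
  calc arsinh x = log (x + √(1 + x ^ 2)) := rfl
    _ ≤ log ((2 + x) ^ 2) := log_le_log (by positivity) (by nlinarith)
    _ = 2 * log (2 + x) := by rw [log_pow, Nat.cast_ofNat]

lemma continuous_inv_sqrt_one_add_sq : Continuous fun y : ℝ => (√(1 + y ^ 2))⁻¹ :=
  Continuous.inv₀ (by fun_prop) fun y => by positivity

lemma integral_inv_sqrt_one_add_sq (a b : ℝ) :
    ∫ y in a..b, (√(1 + y ^ 2))⁻¹ = arsinh b - arsinh a :=
  intervalIntegral.integral_eq_sub_of_hasDerivAt (fun y _ => hasDerivAt_arsinh y)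
    (continuous_inv_sqrt_one_add_sq.intervalIntegrable a b)

lemma windowIntegralLE_inv_sqrt_one_add_sq {T : ℝ} (hT : 0 ≤ T) :
    WindowIntegralLE (fun y => (√(1 + y ^ 2))⁻¹) (2 * T) (4 * log (2 + T)) := by
  intro a b hab hT'
  have hmono : arsinh ((b - a) / 2) ≤ arsinh T := arsinh_le_arsinh.2 (by linarith)
  rw [integral_inv_sqrt_one_add_sq]
  linarith [arsinh_sub_arsinh_le hab, arsinh_le_two_mul_log_two_add hT]

end Window

lemma intervalIntegrable_slice {H : ℝ × ℝ → E} (hH : Continuous H) (s a b : ℝ) :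
    IntervalIntegrable (fun y => H (y, s)) volume a b :=
  Continuous.intervalIntegrable (by fun_prop) a b

section Wave

variable [NormedSpace ℝ E]

/-- The function `u⁰` of d'Alembert's formula: the solution of the free wave equation with initial
position `f` and initial velocity `g`, evaluated at `q = (x, t)`. -/
noncomputable def freeWave (f g : ℝ → E) (q : ℝ × ℝ) : E :=
  (1 / 2 : ℝ) • (f (q.1 + q.2) + f (q.1 - q.2)) + (1 / 2 : ℝ) • ∫ y in (q.1 - q.2)..(q.1 + q.2), g y

/-- Duhamel's integral for the wave equation with zero initial data and source `H`, evaluated at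
`q = (x, t)`. The integral over the backward triangle `D(x, t)` is written as an iterated one. -/
noncomputable def duhamel (H : ℝ × ℝ → E) (q : ℝ × ℝ) : E :=
  (1 / 2 : ℝ) • ∫ s in (0:ℝ)..q.2, ∫ y in (q.1 - q.2 + s)..(q.1 + q.2 - s), H (y, s)

section FreeWave

variable {f g : ℝ → E}

lemma continuous_freeWave (hf : Continuous f) (hg : ∀ a b, IntervalIntegrable g volume a b) :
    Continuous (freeWave f g) := by
  have hprim : Continuous fun b => ∫ y in (0:ℝ)..b, g y :=
    intervalIntegral.continuous_primitive hg 0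
  have hint : Continuous fun q : ℝ × ℝ => ∫ y in (q.1 - q.2)..(q.1 + q.2), g y := by
    have hsub (q : ℝ × ℝ) := intervalIntegral.integral_interval_sub_left
      (hg 0 (q.1 + q.2)) (hg 0 (q.1 - q.2))
    simp only [← hsub]
    fun_prop
  unfold freeWave
  fun_prop

lemma norm_freeWave_le {M : ℝ} (hf : ∀ x, ‖f x‖ ≤ M) (hg : Integrable g) (q : ℝ × ℝ) :
    ‖freeWave f g q‖ ≤ M + 1 / 2 * ∫ y, ‖g y‖ := by
  have hsum : ‖f (q.1 + q.2) + f (q.1 - q.2)‖ ≤ M + M := norm_add_le_of_le (hf _) (hf _)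
  have hint : ‖∫ y in (q.1 - q.2)..(q.1 + q.2), g y‖ ≤ ∫ y, ‖g y‖ :=
    intervalIntegral.norm_integral_le_integral_norm_uIoc.trans
      (setIntegral_le_integral hg.norm (.of_forall fun _ => norm_nonneg _))
  refine (norm_add_le _ _).trans ?_
  rw [norm_smul, norm_smul, norm_of_nonneg (by norm_num : (0:ℝ) ≤ 1 / 2)]
  linarith

end FreeWave

section Duhamel

variable {H H' : ℝ × ℝ → E}

lemma continuous_integral_triangle_slice (hH : Continuous H) :
    Continuous fun z : (ℝ × ℝ) × ℝ =>
      ∫ y in (z.1.1 - z.1.2 + z.2)..(z.1.1 + z.1.2 - z.2), H (y, z.2) := by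
  have hprim {e : (ℝ × ℝ) × ℝ → ℝ} (he : Continuous e) :
      Continuous fun z : (ℝ × ℝ) × ℝ => ∫ y in (0:ℝ)..e z, H (y, z.2) :=
    intervalIntegral.continuous_parametric_intervalIntegral_of_continuous
      (f := fun (z : (ℝ × ℝ) × ℝ) y => H (y, z.2)) (by unfold Function.uncurry; fun_prop) he
  have hsub (z : (ℝ × ℝ) × ℝ) := intervalIntegral.integral_interval_sub_left
    (intervalIntegrable_slice hH z.2 0 (z.1.1 + z.1.2 - z.2))
    (intervalIntegrable_slice hH z.2 0 (z.1.1 - z.1.2 + z.2))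
  simp only [← hsub]
  exact (hprim (by fun_prop)).sub (hprim (by fun_prop))

lemma continuous_duhamel (hH : Continuous H) : Continuous (duhamel H) :=
  (intervalIntegral.continuous_parametric_intervalIntegral_of_continuous
    (f := fun (q : ℝ × ℝ) s => ∫ y in (q.1 - q.2 + s)..(q.1 + q.2 - s), H (y, s))
    (continuous_integral_triangle_slice hH) continuous_snd).const_smul _

lemma duhamel_zero : duhamel (0 : ℝ × ℝ → E) = 0 := by
  ext q
  simp [duhamel]

lemma duhamel_sub (hH : Continuous H) (hH' : Continuous H') :
    duhamel (H - H') = duhamel H - duhamel H' := by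
  ext q
  have houter {G : ℝ × ℝ → E} (hG : Continuous G) : IntervalIntegrable
      (fun s => ∫ y in (q.1 - q.2 + s)..(q.1 + q.2 - s), G (y, s)) volume 0 q.2 :=
    ((continuous_integral_triangle_slice hG).comp (Continuous.prodMk_right q)).intervalIntegrable
      _ _
  simp only [duhamel, Pi.sub_apply, ← smul_sub]
  rw [← intervalIntegral.integral_sub (houter hH) (houter hH')]
  simp only [intervalIntegral.integral_sub (intervalIntegrable_slice hH _ _ _)
    (intervalIntegrable_slice hH' _ _ _)]

lemma norm_duhamel_le {V : ℝ → ℝ} {κ T : ℝ} (hV : Continuous V)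
    (hVκ : WindowIntegralLE V (2 * T) κ) (hH : ∀ q, ‖H q‖ ≤ V q.1) (x : ℝ) {t : ℝ}
    (ht : t ∈ Icc 0 T) : ‖duhamel H (x, t)‖ ≤ κ * T / 2 := by
  have hT : 0 ≤ T := ht.1.trans ht.2
  have hslice (s : ℝ) (hs : s ∈ uIoc 0 t) : ‖∫ y in (x - t + s)..(x + t - s), H (y, s)‖ ≤ κ := by
    rw [uIoc_of_le ht.1] at hs
    have hab : x - t + s ≤ x + t - s := by linarith [hs.2]
    exact (intervalIntegral.norm_integral_le_of_norm_le hab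
      (.of_forall fun y _ => hH (y, s)) (hV.intervalIntegrable _ _)).trans
      (hVκ _ _ hab (by linarith [hs.1, ht.2]))
  calc ‖duhamel H (x, t)‖
      = 1 / 2 * ‖∫ s in (0:ℝ)..t, ∫ y in (x - t + s)..(x + t - s), H (y, s)‖ := by
        rw [duhamel, norm_smul, norm_of_nonneg (by norm_num)]
    _ ≤ 1 / 2 * (κ * |t - 0|) := by
        gcongr
        exact intervalIntegral.norm_integral_le_of_norm_le_const hslice
    _ ≤ 1 / 2 * (κ * T) := by
        rw [sub_zero, abs_of_nonneg ht.1]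
        gcongr
        · exact hVκ.nonneg (by positivity)
        · exact ht.2
    _ = κ * T / 2 := by ring

lemma norm_duhamel_smul_sub_le {W : ℝ → ℝ} {κ T δ : ℝ} (hW : Continuous W) (hW0 : ∀ y, 0 ≤ W y)
    (hWκ : WindowIntegralLE W (2 * T) κ) (hH : Continuous H) (hH' : Continuous H')
    (hδ : ∀ q, ‖H q - H' q‖ ≤ δ) (x : ℝ) {t : ℝ} (ht : t ∈ Icc 0 T) :
    ‖duhamel (fun q => W q.1 • H q) (x, t) - duhamel (fun q => W q.1 • H' q) (x, t)‖
      ≤ δ * κ * T / 2 := by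
  have hδ0 : 0 ≤ δ := (norm_nonneg _).trans (hδ 0)
  rw [← Pi.sub_apply (duhamel _), ← duhamel_sub (by fun_prop) (by fun_prop)]
  refine norm_duhamel_le (hW.const_mul δ) (hWκ.const_mul hδ0) (fun q => ?_) x ht
  rw [Pi.sub_apply, ← smul_sub, norm_smul, norm_of_nonneg (hW0 q.1), mul_comm]
  exact mul_le_mul_of_nonneg_right (hδ q) (hW0 q.1)

lemma norm_duhamel_smul_comp_sub_le {E' : Type*} [NormedAddCommGroup E'] {F : E' → E}
    {W : ℝ → ℝ} {κ T R δ : ℝ} {K : ℝ≥0} {u v : ℝ × ℝ → E'}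
    (hF : LipschitzOnWith K F (closedBall 0 R)) (hW : Continuous W) (hW0 : ∀ y, 0 ≤ W y)
    (hWκ : WindowIntegralLE W (2 * T) κ) (hu : Continuous u) (hv : Continuous v)
    (huR : ∀ q, ‖u q‖ ≤ R) (hvR : ∀ q, ‖v q‖ ≤ R) (hδ : ∀ q, ‖u q - v q‖ ≤ δ) (x : ℝ) {t : ℝ}
    (ht : t ∈ Icc 0 T) :
    ‖duhamel (fun q => W q.1 • F (u q)) (x, t) - duhamel (fun q => W q.1 • F (v q)) (x, t)‖
      ≤ K * κ * T / 2 * δ := by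
  have hu_mem (q : ℝ × ℝ) : u q ∈ closedBall 0 R := mem_closedBall_zero_iff.2 (huR q)
  have hv_mem (q : ℝ × ℝ) : v q ∈ closedBall 0 R := mem_closedBall_zero_iff.2 (hvR q)
  have hFδ (q : ℝ × ℝ) : ‖F (u q) - F (v q)‖ ≤ K * δ :=
    (hF.norm_sub_le (hu_mem q) (hv_mem q)).trans (mul_le_mul_of_nonneg_left (hδ q) K.2)
  refine (norm_duhamel_smul_sub_le hW hW0 hWκ (hF.continuousOn.comp_continuous hu hu_mem)
    (hF.continuousOn.comp_continuous hv hv_mem) hFδ x ht).trans_eq ?_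
  ring

end Duhamel

theorem exists_eq_add_duhamel [CompleteSpace E] {F : E → E} {W : ℝ → ℝ} {w : ℝ × ℝ → E}
    {κ T R : ℝ} {K θ : ℝ≥0} (hT : 0 ≤ T) (hR : 0 ≤ R)
    (hF : LipschitzOnWith K F (closedBall 0 R)) (hF0 : F 0 = 0)
    (hW : Continuous W) (hW0 : ∀ y, 0 ≤ W y) (hWκ : WindowIntegralLE W (2 * T) κ)
    (hw : Continuous w) (hwR : ∀ x, ∀ t ∈ Icc 0 T, ‖w (x, t)‖ ≤ (1 - θ) * R)
    (hθ : θ < 1) (hKθ : K * κ * T / 2 ≤ θ) :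
    ∃ u : ℝ × ℝ → E, Continuous u ∧ (∀ q, ‖u q‖ ≤ R) ∧
      ∀ x, ∀ t ∈ Icc 0 T, u (x, t) = w (x, t) + duhamel (fun q => W q.1 • F (u q)) (x, t) := by
  have hcontr {u v : ℝ × ℝ → E} (hu : Continuous u) (hv : Continuous v) (huR : ∀ q, ‖u q‖ ≤ R)
      (hvR : ∀ q, ‖v q‖ ≤ R) {δ : ℝ} (hδ : ∀ q, ‖u q - v q‖ ≤ δ) (x : ℝ) {t : ℝ}
      (ht : t ∈ Icc 0 T) :
      ‖duhamel (fun q => W q.1 • F (u q)) (x, t) - duhamel (fun q => W q.1 • F (v q)) (x, t)‖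
        ≤ θ * δ :=
    (norm_duhamel_smul_comp_sub_le hF hW hW0 hWκ hu hv huR hvR hδ x ht).trans
      (mul_le_mul_of_nonneg_right hKθ ((norm_nonneg _).trans (hδ 0)))
  -- Freezing time outside `[0, T]` lets the iteration act on functions on the whole plane.
  let ρ (q : ℝ × ℝ) : ℝ × ℝ := (q.1, projIcc 0 T hT q.2)
  have hρ : Continuous ρ := continuous_fst.prodMk
    (continuous_subtype_val.comp (continuous_projIcc.comp continuous_snd))
  let Φ (v : ℝ × ℝ → E) (q : ℝ × ℝ) : E := w (ρ q) + duhamel (fun q => W q.1 • F (v q)) (ρ q)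
  have hΦ_maps :
      MapsTo Φ {v | Continuous v ∧ ∀ q, ‖v q‖ ≤ R} {v | Continuous v ∧ ∀ q, ‖v q‖ ≤ R} := by
    rintro v ⟨hv, hvR⟩
    have hFv : Continuous fun q => F (v q) :=
      hF.continuousOn.comp_continuous hv fun q => mem_closedBall_zero_iff.2 (hvR q)
    refine ⟨(hw.comp hρ).add ((continuous_duhamel
      ((hW.comp continuous_fst).smul hFv)).comp hρ), fun q => ?_⟩
    have hzero : duhamel (fun q : ℝ × ℝ => W q.1 • F ((0 : ℝ × ℝ → E) q)) = 0 := by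
      simpa [hF0] using! duhamel_zero (E := E)
    have hduh := hcontr hv continuous_zero hvR (by simpa using hR) (by simpa using hvR)
      q.1 (projIcc 0 T hT q.2).2
    rw [hzero, Pi.zero_apply, sub_zero] at hduh
    linarith [norm_add_le_of_le (hwR q.1 _ (projIcc 0 T hT q.2).2) hduh]
  obtain ⟨u, hu, huR, hΦu⟩ := exists_fixedPoint_of_uniform_contraction hR hθ hΦ_maps
    fun u v hu hv huR hvR δ hδ q => by
      simpa only [Φ, add_sub_add_left_eq_sub] using
        hcontr hu hv huR hvR hδ q.1 (projIcc 0 T hT q.2).2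
  refine ⟨u, hu, huR, fun x t ht => ?_⟩
  have hρt : ρ (x, t) = (x, t) := by simp only [ρ, projIcc_of_mem hT ht]
  simpa only [Φ, hρt] using (congrFun hΦu (x, t)).symm

end Wave

theorem stmt_4_general [NormedSpace ℝ E] [CompleteSpace E] {p C : ℝ} (hp : 1 ≤ p) (hC : 0 < C)
    {F : E → E} (hF0 : F 0 = 0)
    (hF : ∀ r s, ‖F r - F s‖ ≤ C * max ‖r‖ ‖s‖ ^ (p - 1) * ‖r - s‖)
    {f g : ℝ → E} (hf : Continuous f) (hfb : BddAbove (range fun x => ‖f x‖))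
    (hg : Integrable g) :
    ∃ c > (0:ℝ), ∀ ε : ℝ, 0 < ε → ∀ T : ℝ, 0 < T → T * log (2 + T) ≤ c * ε ^ (-(p - 1)) →
      ∃ u : ℝ → ℝ → E, ContinuousOn (fun q : ℝ × ℝ => u q.1 q.2) (univ ×ˢ Icc 0 T) ∧
        (∃ B : ℝ, ∀ x t : ℝ, t ∈ Icc (0:ℝ) T → ‖u x t‖ ≤ B) ∧
        ∀ x t : ℝ, t ∈ Icc (0:ℝ) T → u x t = ε • freeWave f g (x, t)
          + duhamel (fun q => (√(1 + q.1 ^ 2))⁻¹ • F (u q.1 q.2)) (x, t) := by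
  obtain ⟨M, hM0, hM⟩ : ∃ M > 0, ∀ q, ‖freeWave f g q‖ ≤ M := by
    obtain ⟨Mf, hMf⟩ := hfb
    exact ⟨max 1 (Mf + 1 / 2 * ∫ y, ‖g y‖), by positivity, fun q =>
      (norm_freeWave_le (fun x => hMf ⟨x, rfl⟩) hg q).trans (le_max_right _ _)⟩
  refine ⟨(4 * C * (2 * M) ^ (p - 1))⁻¹, by positivity, fun ε hε T hT hTε => ?_⟩
  set R := 2 * M * ε with hR
  have hsmall : ((C * R ^ (p - 1)).toNNReal : ℝ) * (4 * log (2 + T)) * T / 2 ≤ (1 / 2 : ℝ≥0) := by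
    rw [coe_toNNReal _ (by positivity), hR, mul_rpow (by positivity) hε.le]
    calc C * ((2 * M) ^ (p - 1) * ε ^ (p - 1)) * (4 * log (2 + T)) * T / 2
        = 2 * C * (2 * M) ^ (p - 1) * ε ^ (p - 1) * (T * log (2 + T)) := by ring
      _ ≤ 2 * C * (2 * M) ^ (p - 1) * ε ^ (p - 1)
          * ((4 * C * (2 * M) ^ (p - 1))⁻¹ * ε ^ (-(p - 1))) := by gcongr
      _ = (1 / 2 : ℝ≥0) := by
          rw [rpow_neg hε.le, NNReal.coe_div, NNReal.coe_one, NNReal.coe_ofNat]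
          field_simp
          norm_num
  have hwR (x t : ℝ) (_ : t ∈ Icc 0 T) :
      ‖ε • freeWave f g (x, t)‖ ≤ (1 - (1 / 2 : ℝ≥0)) * R := by
    rw [norm_smul, norm_of_nonneg hε.le, NNReal.coe_div, NNReal.coe_one, NNReal.coe_ofNat]
    linarith [mul_le_mul_of_nonneg_left (hM (x, t)) hε.le]
  obtain ⟨u, hu, huR, hu_eq⟩ := exists_eq_add_duhamel hT.le (by positivity)
    (lipschitzOnWith_closedBall_of_norm_sub_le hp hC.le hF R) hF0 continuous_inv_sqrt_one_add_sq
    (fun y => by positivity) (windowIntegralLE_inv_sqrt_one_add_sq hT.le)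
    ((continuous_freeWave hf fun _ _ => hg.intervalIntegrable).const_smul ε) hwR
    (NNReal.half_lt_self one_ne_zero) hsmall
  exact ⟨fun x t => u (x, t), hu.continuousOn, ⟨R, fun x t _ => huR (x, t)⟩, hu_eq⟩

/-- Lower bound of the lifespan in the case `a = 0`: there is `c > 0` such that for all
`ε > 0` and `0 < T ≤ φ⁻¹(c ε^{-(p-1)})` (equivalently `φ(T) = T log(2+T) ≤ c ε^{-(p-1)}`),
the integral equation `u = ε u⁰ + L(F(u) (1+y²)^{-1/2})`, with `F(u) = |u|^{p-1}u` or `|u|^p`,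
has a bounded continuous solution on `ℝ × [0,T]`. -/
theorem stmt_4 (p : ℝ) (hp : 1 < p)
    (F : ℝ → ℝ) (hF : (∀ s : ℝ, F s = |s| ^ (p - 1) * s) ∨ (∀ s : ℝ, F s = |s| ^ p))
    (f g : ℝ → ℝ) (hf : ContDiff ℝ 2 f) (hfb : BddAbove (Set.range fun x => |f x|))
    (hg : ContDiff ℝ 1 g) (hgi : Integrable g) :
    ∃ c > (0:ℝ), ∀ ε : ℝ, 0 < ε →
      ∀ T : ℝ, 0 < T → T * Real.log (2 + T) ≤ c * ε ^ (-(p - 1)) →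
        ∃ u : ℝ → ℝ → ℝ,
          ContinuousOn (fun q : ℝ × ℝ => u q.1 q.2) (Set.univ ×ˢ Set.Icc 0 T) ∧
          (∃ B : ℝ, ∀ x t : ℝ, t ∈ Set.Icc (0:ℝ) T → |u x t| ≤ B) ∧
          ∀ x t : ℝ, t ∈ Set.Icc (0:ℝ) T →
            u x t = ε * ((f (x + t) + f (x - t)) / 2 + 1 / 2 * ∫ y in (x - t)..(x + t), g y)
              + 1 / 2 * ∫ s in (0:ℝ)..t, ∫ y in (x - t + s)..(x + t - s),
                  F (u y s) / (1 + y ^ 2) ^ ((1:ℝ) / 2) := by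
  have hF : IsPowerNonlinearity p F := hF
  simpa [freeWave, duhamel, sqrt_eq_rpow, div_eq_inv_mul] using
    stmt_4_general hp.le (by positivity) (hF.map_zero (by positivity)) (hF.norm_sub_le hp.le)
      hf.continuous hfb hgi
end
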